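/- Let X be a compact T1 topological space and T : X → X a continuous map that is an embedding (a homeomorphism onto its image T(X)), is positively refinement expansive, and has extension closed image T(X). Then X is finite. -/

import Mathlib

open Set Filter Topology ENNReal

variable {X : Type*}

/-- `α` is an open cover of `X`: a family of open sets whose union is `X`. -/
def IsOpenCover [TopologicalSpace X] (α : Set (Set X)) : Prop :=
  (∀ U ∈ α, IsOpen U) ∧ ⋃₀ α = univ

/-- `α ≺ β`: every member of `α` is contained in some member of `β`. -/
def Refines (α β : Set (Set X)) : Prop := ∀ A ∈ α, ∃ B ∈ β, A ⊆ B

/-- The meet `α ∧ β = {A ∩ B : A ∈ α, B ∈ β}`. -/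
def meetCov (α β : Set (Set X)) : Set (Set X) := Set.image2 (· ∩ ·) α β

/-- `N(α)`: the minimal cardinality of a finite subfamily of `α` covering `X`
(`∞` if there is none), as an element of `[0,∞]`. -/
noncomputable def Ncov (α : Set (Set X)) : ℝ≥0∞ :=
  ⨅ (β : Finset (Set X)) (_ : (↑β : Set (Set X)) ⊆ α ∧ ⋃₀ (↑β : Set (Set X)) = univ),
    (β.card : ℝ≥0∞)

/-- The logarithm `[0,∞] → [0,∞]`, with `log 0 = 0` and `log ∞ = ∞`. -/
noncomputable def logE (x : ℝ≥0∞) : ℝ≥0∞ :=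
  if x = ⊤ then ⊤ else ENNReal.ofReal (Real.log x.toReal)

/-- `H(α) = log N(α)`. -/
noncomputable def Hcov (α : Set (Set X)) : ℝ≥0∞ := logE (Ncov α)

/-- `α ∧ T⁻¹α ∧ ⋯ ∧ T^{-n}α`. -/
def covProd (T : X → X) (α : Set (Set X)) : ℕ → Set (Set X)
  | 0 => α
  | n + 1 => meetCov (covProd T α n) ((fun U => T^[n + 1] ⁻¹' U) '' α)

/-- `h_top(T, α) = limsup_n (1/n)·H(α ∧ T⁻¹α ∧ ⋯ ∧ T^{-(n-1)}α)`. -/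
noncomputable def htopRel (T : X → X) (α : Set (Set X)) : ℝ≥0∞ :=
  Filter.atTop.limsup fun n : ℕ => Hcov (covProd T α n) / ((n : ℝ≥0∞) + 1)

/-- The topological entropy `h_top(T) = sup_α h_top(T, α)` over all open covers `α`. -/
noncomputable def htop [TopologicalSpace X] (T : X → X) : ℝ≥0∞ :=
  ⨆ (α : Set (Set X)) (_ : IsOpenCover α), htopRel T α

/-- `Y ⊆ X` is extension closed: every open cover of the subspace `Y` is of the form
`Y ∧ α` for some open cover `α` of `X`. -/
def ExtClosed [TopologicalSpace X] (Y : Set X) : Prop :=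
  ∀ β : Set (Set ↥Y), IsOpenCover β →
    ∃ α : Set (Set X), IsOpenCover α ∧
      β = (fun A : Set X => (Subtype.val ⁻¹' A : Set ↥Y)) '' α

/-!
Write `α_n` for `α ∧ T⁻¹α ∧ ⋯ ∧ T⁻ⁿα`, where `α` is a positive generator. Extension closedness of
the range makes `α` the pullback `T⁻¹γ` of an open cover `γ`, and `α_n ≺ γ` for some `n`, so
`T⁻¹α_n ≺ α`. Iterating, `T⁻ᵏα_n ≺ α_{n+k}` for every `k`. As each open cover `β` is refined by some
`α_k`, and pulling back does not increase the covering number, `N(β) ≤ N(T⁻ᵏα_n) ≤ N(α_n)`. By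
compactness this bound is finite, whereas in a `T₁` space a finite set `s` yields the open cover by
the sets `(s \ {x})ᶜ`, each of which meets `s` in at most one point, so its covering number is at
least the cardinality of `s`.
-/

section Refinement

variable {Y : Type*} {α β γ : Set (Set X)}

theorem Refines.trans (hαβ : Refines α β) (hβγ : Refines β γ) : Refines α γ := fun A hA ↦
  let ⟨_, hB, hAB⟩ := hαβ A hA
  let ⟨C, hC, hBC⟩ := hβγ _ hB
  ⟨C, hC, hAB.trans hBC⟩

theorem Refines.preimage (h : Refines α β) (f : Y → X) :
    Refines (preimage f '' α) (preimage f '' β) := by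
  rintro _ ⟨A, hA, rfl⟩
  obtain ⟨B, hB, hAB⟩ := h A hA
  exact ⟨f ⁻¹' B, mem_image_of_mem _ hB, preimage_mono hAB⟩

theorem refines_meetCov_iff : Refines γ (meetCov α β) ↔ Refines γ α ∧ Refines γ β := by
  constructor
  · refine fun h ↦ ⟨fun C hC ↦ ?_, fun C hC ↦ ?_⟩ <;>
      obtain ⟨_, ⟨A, hA, B, hB, rfl⟩, hCAB⟩ := h C hC
    · exact ⟨A, hA, hCAB.trans inter_subset_left⟩
    · exact ⟨B, hB, hCAB.trans inter_subset_right⟩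
  · rintro ⟨hα, hβ⟩ C hC
    obtain ⟨A, hA, hCA⟩ := hα C hC
    obtain ⟨B, hB, hCB⟩ := hβ C hC
    exact ⟨A ∩ B, mem_image2_of_mem hA hB, subset_inter hCA hCB⟩

theorem refines_covProd_iff {T : X → X} {n : ℕ} :
    Refines γ (covProd T α n) ↔ ∀ j ≤ n, Refines γ (preimage T^[j] '' α) := by
  induction n with
  | zero => simp [covProd]
  | succ n ih =>
    rw [covProd, refines_meetCov_iff, ih]
    simp only [Nat.le_succ_iff, or_imp, forall_and, forall_eq]

theorem covProd_refines_preimage_iterate (T : X → X) (α : Set (Set X)) {j n : ℕ} (hj : j ≤ n) :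
    Refines (covProd T α n) (preimage T^[j] '' α) :=
  refines_covProd_iff.1 (fun A hA ↦ ⟨A, hA, Subset.rfl⟩) j hj

theorem covProd_refines_covProd_of_le (T : X → X) (α : Set (Set X)) {m n : ℕ} (hmn : m ≤ n) :
    Refines (covProd T α n) (covProd T α m) :=
  refines_covProd_iff.2 fun _ hj ↦ covProd_refines_preimage_iterate T α (hj.trans hmn)

theorem image_preimage_iterate_succ (T : X → X) (k : ℕ) (α : Set (Set X)) :
    preimage T^[k + 1] '' α = preimage T '' (preimage T^[k] '' α) := by
  rw [image_image]
  rfl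

theorem preimage_covProd_refines_covProd_succ {T : X → X} {n : ℕ}
    (h : Refines (preimage T '' covProd T α n) α) :
    Refines (preimage T '' covProd T α n) (covProd T α (n + 1)) := by
  refine refines_covProd_iff.2 fun j hj ↦ ?_
  cases j with
  | zero => simpa using h
  | succ j =>
    rw [image_preimage_iterate_succ]
    exact (covProd_refines_preimage_iterate T α (by lia)).preimage T

theorem preimage_iterate_covProd_refines_covProd_add {T : X → X} {n : ℕ}
    (h : Refines (preimage T '' covProd T α n) α) (k : ℕ) :
    Refines (preimage T^[k] '' covProd T α n) (covProd T α (n + k)) := by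
  induction k with
  | zero => simpa using covProd_refines_covProd_of_le T α le_rfl
  | succ k ih =>
    have hk : Refines (preimage T '' covProd T α (n + k)) α :=
      ((covProd_refines_covProd_of_le T α (Nat.le_add_right n k)).preimage T).trans h
    rw [image_preimage_iterate_succ]
    exact (ih.preimage T).trans (preimage_covProd_refines_covProd_succ hk)

end Refinement

section OpenCover

variable {Y : Type*} [TopologicalSpace X] [TopologicalSpace Y] {α β : Set (Set X)}

theorem IsOpenCover.meetCov (hα : IsOpenCover α) (hβ : IsOpenCover β) :
    IsOpenCover (meetCov α β) := by
  refine ⟨?_, sUnion_eq_univ_iff.2 fun x ↦ ?_⟩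
  · rintro _ ⟨A, hA, B, hB, rfl⟩
    exact (hα.1 A hA).inter (hβ.1 B hB)
  · obtain ⟨A, hA, hxA⟩ := sUnion_eq_univ_iff.1 hα.2 x
    obtain ⟨B, hB, hxB⟩ := sUnion_eq_univ_iff.1 hβ.2 x
    exact ⟨A ∩ B, mem_image2_of_mem hA hB, hxA, hxB⟩

theorem IsOpenCover.preimage (hα : IsOpenCover α) {f : Y → X} (hf : Continuous f) :
    IsOpenCover (preimage f '' α) := by
  refine ⟨forall_mem_image.2 fun A hA ↦ (hα.1 A hA).preimage hf, ?_⟩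
  rw [sUnion_image, ← preimage_iUnion₂, ← sUnion_eq_biUnion, hα.2, preimage_univ]

theorem IsOpenCover.covProd (hα : IsOpenCover α) {T : X → X} (hT : Continuous T) (n : ℕ) :
    IsOpenCover (covProd T α n) := by
  induction n with
  | zero => exact hα
  | succ n ih => exact ih.meetCov (hα.preimage (hT.iterate (n + 1)))

theorem IsOpenCover.exists_preimage_eq_of_surjective (hα : IsOpenCover α) {f : X → Y}
    (hf : IsInducing f) (hsurj : Function.Surjective f) :
    ∃ β, IsOpenCover β ∧ Set.preimage f '' β = α := by
  refine ⟨{V | IsOpen V ∧ f ⁻¹' V ∈ α}, ⟨fun V hV ↦ hV.1, sUnion_eq_univ_iff.2 fun y ↦ ?_⟩, ?_⟩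
  · obtain ⟨x, rfl⟩ := hsurj y
    obtain ⟨U, hU, hxU⟩ := sUnion_eq_univ_iff.1 hα.2 x
    obtain ⟨V, hV, rfl⟩ := hf.isOpen_iff.1 (hα.1 U hU)
    exact ⟨V, ⟨hV, hU⟩, hxU⟩
  · refine (image_subset_iff.2 fun V hV ↦ hV.2).antisymm fun U hU ↦ ?_
    obtain ⟨V, hV, rfl⟩ := hf.isOpen_iff.1 (hα.1 U hU)
    exact ⟨V, ⟨hV, hU⟩, rfl⟩

theorem ExtClosed.exists_isOpenCover_preimage_eq {f : X → Y} (hrange : ExtClosed (range f))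
    (hf : IsInducing f) (hα : IsOpenCover α) :
    ∃ γ, IsOpenCover γ ∧ preimage f '' γ = α := by
  obtain ⟨β, hβ, hβα⟩ := hα.exists_preimage_eq_of_surjective
    (hf.codRestrict mem_range_self) rangeFactorization_surjective
  obtain ⟨γ, hγ, rfl⟩ := hrange β hβ
  refine ⟨γ, hγ, ?_⟩
  rw [← hβα, image_image]
  rfl

end OpenCover

section CoveringNumber

variable {Y : Type*} {α : Set (Set X)}

theorem ncov_le_card {F : Finset (Set X)} (hF : (F : Set (Set X)) ⊆ α)
    (hcover : ⋃₀ (F : Set (Set X)) = univ) : Ncov α ≤ F.card :=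
  iInf₂_le F ⟨hF, hcover⟩

theorem ncov_le_of_preimage_refines {f : Y → X} {β : Set (Set Y)}
    (h : Refines (preimage f '' α) β) : Ncov β ≤ Ncov α := by
  classical
  refine le_iInf₂ fun F ⟨hFα, hF⟩ ↦ ?_
  have hpre : ∀ A ∈ α, ∃ B ∈ β, f ⁻¹' A ⊆ B := fun A hA ↦ h _ (mem_image_of_mem _ hA)
  choose! g hgβ hg using hpre
  have hsub : (F.image g : Set (Set Y)) ⊆ β := by
    rw [Finset.coe_image, image_subset_iff]
    exact fun A hA ↦ hgβ A (hFα hA)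
  have hcover : ⋃₀ (F.image g : Set (Set Y)) = univ := by
    refine sUnion_eq_univ_iff.2 fun y ↦ ?_
    obtain ⟨A, hA, hyA⟩ := sUnion_eq_univ_iff.1 hF (f y)
    exact ⟨g A, Finset.mem_image_of_mem g hA, hg A (hFα hA) hyA⟩
  calc Ncov β ≤ (F.image g).card := ncov_le_card hsub hcover
    _ ≤ F.card := by exact_mod_cast Finset.card_image_le

theorem IsOpenCover.ncov_ne_top [TopologicalSpace X] [CompactSpace X] (hα : IsOpenCover α) :
    Ncov α ≠ ⊤ := by
  obtain ⟨F, hFα, hFfin, hF⟩ := isCompact_univ.elim_finite_subcover_image (c := id) hα.1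
    (by rw [← hα.2, sUnion_eq_biUnion]; rfl)
  lift F to Finset (Set X) using hFfin
  refine ne_top_of_le_ne_top (natCast_ne_top F.card) (ncov_le_card hFα ?_)
  rwa [sUnion_eq_biUnion, ← univ_subset_iff]

theorem card_le_ncov {s : Finset X} (hs : ∀ A ∈ α, (↑s ∩ A).Subsingleton) :
    (s.card : ℝ≥0∞) ≤ Ncov α := by
  refine le_iInf₂ fun F ⟨hFα, hF⟩ ↦ ?_
  exact_mod_cast Finset.card_le_card_of_forall_subsingleton (· ∈ ·)
    (fun x _ ↦ sUnion_eq_univ_iff.1 hF x) (fun A hA ↦ hs A (hFα hA))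

theorem exists_isOpenCover_card_le_ncov [TopologicalSpace X] [T1Space X] (s : Finset X) :
    ∃ α : Set (Set X), IsOpenCover α ∧ (s.card : ℝ≥0∞) ≤ Ncov α := by
  refine ⟨range fun x ↦ (↑s \ {x})ᶜ, ⟨?_, ?_⟩, card_le_ncov ?_⟩
  · rintro _ ⟨x, rfl⟩
    exact s.finite_toSet.sdiff.isClosed.isOpen_compl
  · exact sUnion_eq_univ_iff.2 fun x ↦ ⟨_, mem_range_self x, fun hx ↦ hx.2 rfl⟩
  · rintro _ ⟨x, rfl⟩
    exact subsingleton_singleton.anti fun y ⟨hys, hy⟩ ↦ by_contra fun hyx ↦ hy ⟨hys, hyx⟩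

theorem finite_of_forall_ncov_le [TopologicalSpace X] [T1Space X] {N : ℝ≥0∞} (hN : N ≠ ⊤)
    (h : ∀ α : Set (Set X), IsOpenCover α → Ncov α ≤ N) : Finite X := by
  by_contra hX
  rw [not_finite_iff_infinite] at hX
  obtain ⟨m, hm⟩ := ENNReal.exists_nat_gt hN
  obtain ⟨s, rfl⟩ := Infinite.exists_subset_card_eq X m
  obtain ⟨α, hα, hsα⟩ := exists_isOpenCover_card_le_ncov s
  exact (hm.trans_le (hsα.trans (h α hα))).false

end CoveringNumber

/-- `α` is a positive generator of `T`: an open cover whose iterated meets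
`α ∧ T⁻¹α ∧ ⋯ ∧ T⁻ⁿα` eventually refine any given open cover. A map is positively refinement
expansive when it has a positive generator. -/
structure IsPositiveGenerator [TopologicalSpace X] (T : X → X) (α : Set (Set X)) : Prop where
  isOpenCover : IsOpenCover α
  exists_refines : ∀ β, IsOpenCover β → ∃ n, Refines (covProd T α n) β

namespace IsPositiveGenerator

variable [TopologicalSpace X] {T : X → X} {α : Set (Set X)}

theorem exists_preimage_covProd_refines (hα : IsPositiveGenerator T α) (hT : IsInducing T)
    (hrange : ExtClosed (range T)) : ∃ n, Refines (preimage T '' covProd T α n) α := by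
  obtain ⟨γ, hγ, hγα⟩ := hrange.exists_isOpenCover_preimage_eq hT hα.isOpenCover
  obtain ⟨n, hn⟩ := hα.exists_refines γ hγ
  exact ⟨n, hγα ▸ hn.preimage T⟩

theorem ncov_le_ncov_covProd (hα : IsPositiveGenerator T α) {n : ℕ}
    (hn : Refines (preimage T '' covProd T α n) α) {β : Set (Set X)} (hβ : IsOpenCover β) :
    Ncov β ≤ Ncov (covProd T α n) := by
  obtain ⟨k, hk⟩ := hα.exists_refines β hβ
  have hpull : Refines (preimage T^[k] '' covProd T α n) β :=
    (preimage_iterate_covProd_refines_covProd_add hn k).trans <|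
      (covProd_refines_covProd_of_le T α (Nat.le_add_left k n)).trans hk
  exact ncov_le_of_preimage_refines hpull

end IsPositiveGenerator

/-- A compact `T₁` space admitting a positively refinement expansive embedding with
extension closed image is finite. -/
theorem stmt_17 {X : Type*} [TopologicalSpace X] [CompactSpace X] [T1Space X]
    (T : X → X) (hT : Continuous T) (hemb : IsEmbedding T)
    (hexp : ∃ α : Set (Set X), IsOpenCover α ∧
      ∀ β : Set (Set X), IsOpenCover β → ∃ n : ℕ, Refines (covProd T α n) β)
    (hec : ExtClosed (Set.range T)) :
    Finite X := by
  obtain ⟨α, hα, hgen⟩ := hexp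
  have hgenerator : IsPositiveGenerator T α := ⟨hα, hgen⟩
  obtain ⟨n, hn⟩ := hgenerator.exists_preimage_covProd_refines hemb.isInducing hec
  have hfinite : Ncov (covProd T α n) ≠ ⊤ := (hα.covProd hT n).ncov_ne_top
  exact finite_of_forall_ncov_le hfinite fun β hβ ↦ hgenerator.ncov_le_ncov_covProd hn hβ
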